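/- Let T be a tournament and let C be a directed cycle in T of length m ≥ 7. Then there exists a directed cycle C″ of length m − 2 with V(C″) ⊆ V(C) such that, denoting the two remaining vertices by x and y with (x, y) an arc of T, the vertex y satisfies d⁺(y, C) ≤ m − 4, where d⁺(y, C) is the number of out-neighbours of y among the vertices of C. -/

import Mathlib

open Set

/-- `T` is a tournament: irreflexive, and for distinct vertices exactly one
of the two possible arcs is present. -/
def IsTournament {V : Type*} (T : V → V → Prop) : Prop :=
  (∀ x, ¬ T x x) ∧ ∀ x y, x ≠ y → (T x y ↔ ¬ T y x)

/-- `c` is a directed cycle of length `q` in the digraph `T`. -/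
def IsCycle {V : Type*} (T : V → V → Prop) (q : ℕ) (c : ZMod q → V) : Prop :=
  Function.Injective c ∧ ∀ i, T (c i) (c (i + 1))

/-- The cycles in the family `C` are pairwise vertex-disjoint. -/
def DisjointCycles {V : Type*} {k q : ℕ} (C : Fin k → ZMod q → V) : Prop :=
  ∀ j j' : Fin k, j ≠ j' → Disjoint (Set.range (C j)) (Set.range (C j'))

/-- `T` contains `k` pairwise vertex-disjoint directed cycles of length `q`. -/
def HasDisjointCycles {V : Type*} (T : V → V → Prop) (k q : ℕ) : Prop :=
  ∃ C : Fin k → ZMod q → V, (∀ j, IsCycle T q (C j)) ∧ DisjointCycles C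

/-- The out-degree of a vertex `v`. -/
noncomputable def outDeg {V : Type*} (T : V → V → Prop) (v : V) : ℕ :=
  {w | T v w}.ncard

/-- `d⁺(v, Y)`: the number of out-neighbours of `v` inside the set `Y`. -/
noncomputable def outDegTo {V : Type*} (T : V → V → Prop) (v : V) (Y : Set V) : ℕ :=
  {w ∈ Y | T v w}.ncard

/-- `d⁺(X, v)`: the number of in-neighbours of `v` inside the set `X`. -/
noncomputable def inDegFrom {V : Type*} (T : V → V → Prop) (X : Set V) (v : V) : ℕ :=
  {x ∈ X | T x v}.ncard

/-- `d⁺(X, Y)`: the number of arcs from `X` to `Y`. -/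
noncomputable def arcs {V : Type*} (T : V → V → Prop) (X Y : Set V) : ℕ :=
  {p : V × V | p.1 ∈ X ∧ p.2 ∈ Y ∧ T p.1 p.2}.ncard

/-- There is an `r`-matching from `X` to `Y`: `r` arcs from `X` to `Y` that
pairwise share no endpoints. -/
def HasMatching {V : Type*} (T : V → V → Prop) (X Y : Set V) (r : ℕ) : Prop :=
  ∃ e : Fin r → V × V,
    (∀ i, (e i).1 ∈ X ∧ (e i).2 ∈ Y ∧ T (e i).1 (e i).2) ∧
    ∀ i j, i ≠ j → (e i).1 ≠ (e j).1 ∧ (e i).2 ≠ (e j).2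

/-- `u` is a Hamiltonian path of the subtournament induced on `S`, written as
`P = (u_{l} … u₂ u₁)`: the vertex `u ⟨0,_⟩` is `u₁`, and each arc goes from the
higher-indexed vertex to the next lower-indexed one. -/
def IsHamPathOn {V : Type*} (T : V → V → Prop) (S : Set V) {l : ℕ}
    (u : Fin l → V) : Prop :=
  Function.Injective u ∧ Set.range u = S ∧
    ∀ (i : ℕ) (h : i + 1 < l), T (u ⟨i + 1, h⟩) (u ⟨i, Nat.lt_of_succ_lt h⟩)

/-!
Pull `T` back along the cycle, so that the cycle becomes spanning and the tournament strongly
connected, and count in-degrees: `d⁺(y) ≤ m - 4` means `d⁻(y) ≥ 3`. Let `y` have minimum in-degree.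
If it is at least three, any cycle of length `m - 2` will do, and Moon's theorem provides one.

Otherwise `|N⁻(y)| ≤ 2`, so `N⁻(y)` has a source `x`, and any in-neighbour `p` of `x` lies in the
second in-neighbourhood `N⁻⁻(y)`. Every vertex of the in-ball of radius two around `y` can be
inserted into the triangle `x → y → p → x` or into the cycle obtained so far, and those of
`N⁻⁻(y) \ {p}` may be left out at will. When at least two vertices lie outside the ball, the cycle
on the ball is extended to `m - 2` vertices: `y` and `x` dominate everything outside, which yields
the in-degree. When the ball misses at most one vertex, the removed pair is sought in `N⁻⁻(y)` and
outside the ball.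
-/

open Function

section Tournament

variable {V : Type*} {T : V → V → Prop} {a b c d v x y : V}

/-- The in-neighbourhood `N⁻(v)`. -/
def inNbrs (T : V → V → Prop) (v : V) : Set V :=
  {u | T u v}

/-- The second in-neighbourhood of `v`: the vertices whose distance to `v` is exactly two. The
condition `u ≠ v` is left out, as it is automatic in a tournament. -/
def secondInNbrs (T : V → V → Prop) (v : V) : Set V :=
  {u | ¬ T u v ∧ ∃ w, T u w ∧ T w v}

/-- The in-ball of radius two: the vertices whose distance to `v` is at most two. -/
def inBall (T : V → V → Prop) (v : V) : Set V :=
  insert v (inNbrs T v ∪ secondInNbrs T v)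

/-- `x` is a source of the subtournament induced on `S`. -/
def IsSource (T : V → V → Prop) (S : Set V) (x : V) : Prop :=
  x ∈ S ∧ ∀ v ∈ S, v ≠ x → T x v

@[simp] lemma mem_inNbrs : a ∈ inNbrs T v ↔ T a v := Iff.rfl

lemma three_le_ncard_inNbrs [Finite V] (ha : T a v) (hb : T b v) (hc : T c v) (hab : a ≠ b)
    (hac : a ≠ c) (hbc : b ≠ c) : 3 ≤ (inNbrs T v).ncard := by
  have hsub : {a, b, c} ⊆ inNbrs T v := by
    rintro u (rfl | rfl | rfl) <;> assumption
  rw [← Set.ncard_eq_three.2 ⟨a, b, c, hab, hac, hbc, rfl⟩]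
  exact Set.ncard_le_ncard hsub

lemma two_le_ncard_inNbrs_of_mem [Finite V] (hxy : x ∈ inNbrs T y)
    (hle : (inNbrs T y).ncard ≤ (inNbrs T x).ncard) (h₂ : 2 ≤ (secondInNbrs T y).ncard) :
    2 ≤ (inNbrs T x).ncard := by
  by_contra! hlt
  have hsub : (inNbrs T y).Subsingleton := Set.ncard_le_one_iff_subsingleton.1 (by omega)
  have hsecond : secondInNbrs T y ⊆ inNbrs T x := fun v ⟨_, u, hvu, huy⟩ ↦ hsub huy hxy ▸ hvu
  exact hlt.not_ge (h₂.trans (Set.ncard_le_ncard hsecond))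

namespace IsTournament

lemma ne (hT : IsTournament T) (hab : T a b) : a ≠ b := by
  rintro rfl
  exact hT.1 a hab

lemma asymm (hT : IsTournament T) (hab : T a b) : ¬ T b a :=
  (hT.2 a b (hT.ne hab)).1 hab

lemma arc_of_not_arc (hT : IsTournament T) (hne : a ≠ b) (hba : ¬ T b a) : T a b :=
  (hT.2 a b hne).2 hba

lemma onFun {W : Type*} {f : W → V} (hT : IsTournament T) (hf : Injective f) :
    IsTournament (T on f) :=
  ⟨fun i ↦ hT.1 (f i), fun _ _ hij ↦ hT.2 _ _ (hf.ne hij)⟩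

lemma notMem_secondInNbrs_self (hT : IsTournament T) : v ∉ secondInNbrs T v :=
  fun ⟨_, _, hvw, hwv⟩ ↦ hT.asymm hvw hwv

lemma arc_of_mem_secondInNbrs (hT : IsTournament T) (ha : a ∈ secondInNbrs T v) : T v a :=
  hT.arc_of_not_arc (fun h ↦ hT.notMem_secondInNbrs_self (h ▸ ha)) ha.1

lemma arc_of_notMem_inBall (hT : IsTournament T) (ha : a ∉ inBall T v) : T v a := by
  simp only [inBall, Set.mem_insert_iff, Set.mem_union, mem_inNbrs, not_or] at ha
  exact hT.arc_of_not_arc (Ne.symm ha.1) ha.2.1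

lemma arc_of_mem_inNbrs_of_notMem_inBall (hT : IsTournament T) (hb : b ∈ inNbrs T v)
    (ha : a ∉ inBall T v) : T b a := by
  simp only [inBall, Set.mem_insert_iff, Set.mem_union, mem_inNbrs, not_or] at ha
  obtain ⟨-, hav, ha₂⟩ := ha
  refine hT.arc_of_not_arc (fun h ↦ hav (h ▸ hb)) fun hab ↦ ha₂ ⟨hav, b, hab, hb⟩

lemma inNbrs_subset_secondInNbrs (hT : IsTournament T) (hx : IsSource T (inNbrs T y) x) :
    inNbrs T x ⊆ secondInNbrs T y :=
  fun v hvx ↦ ⟨fun hvy ↦ hT.asymm hvx (hx.2 v hvy (hT.ne hvx)), x, hvx, hx.1⟩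

section Finite

variable [Finite V]

lemma outDeg_add_ncard_inNbrs (hT : IsTournament T) (v : V) :
    outDeg T v + (inNbrs T v).ncard + 1 = Nat.card V := by
  have hdisj : Disjoint {w | T v w} (inNbrs T v) :=
    Set.disjoint_left.2 fun _ hvw hwv ↦ hT.asymm hvw hwv
  have hcompl : {w | T v w} ∪ inNbrs T v = {v}ᶜ := by
    ext w
    refine ⟨?_, fun hw ↦ or_iff_not_imp_right.2 (hT.arc_of_not_arc (Ne.symm hw))⟩
    rintro (h | h)
    · exact (hT.ne h).symm
    · exact hT.ne h
  rw [outDeg, ← Set.ncard_union_eq hdisj, hcompl, add_comm, ← Set.ncard_singleton v,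
    Set.ncard_add_ncard_compl]

lemma arc_of_ncard_inNbrs_lt_three (hT : IsTournament T) (hlt : (inNbrs T v).ncard < 3)
    (ha : T a v) (hb : T b v) (hab : a ≠ b) (hda : d ≠ a) (hdb : d ≠ b) (hdv : d ≠ v) : T v d :=
  hT.arc_of_not_arc hdv.symm fun hd ↦
    hlt.not_ge (three_le_ncard_inNbrs ha hb hd hab hda.symm hdb.symm)

lemma exists_arc_of_one_lt_ncard (hT : IsTournament T) {S : Set V} (hS : 1 < S.ncard) :
    ∃ a ∈ S, ∃ b ∈ S, T a b := by
  obtain ⟨a, ha, b, hb, hne⟩ := (Set.one_lt_ncard_iff_nontrivial).1 hS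
  by_cases hab : T a b
  · exact ⟨a, ha, b, hb, hab⟩
  · exact ⟨b, hb, a, ha, hT.arc_of_not_arc hne.symm hab⟩

lemma exists_arc_of_ncard_eq_two (hT : IsTournament T) {S : Set V} (hS : S.ncard = 2) :
    ∃ a b, T a b ∧ S = {a, b} := by
  obtain ⟨a, ha, b, hb, hab⟩ := hT.exists_arc_of_one_lt_ncard (hS.symm ▸ one_lt_two)
  refine ⟨a, b, hab, (Set.eq_of_subset_of_ncard_le (Set.pair_subset ha hb) ?_).symm⟩
  rw [hS, Set.ncard_pair (hT.ne hab)]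

lemma exists_isSource_of_ncard_le_two (hT : IsTournament T) {S : Set V} (hne : S.Nonempty)
    (hS : S.ncard ≤ 2) : ∃ x, IsSource T S x := by
  rcases hS.lt_or_eq with hlt | heq
  · obtain ⟨x, hx⟩ := hne
    have hsub : S.Subsingleton := Set.ncard_le_one_iff_subsingleton.1 (Nat.le_of_lt_succ hlt)
    exact ⟨x, hx, fun v hv hvx ↦ absurd (hsub hv hx) hvx⟩
  · obtain ⟨a, b, hab, rfl⟩ := hT.exists_arc_of_ncard_eq_two heq
    refine ⟨a, Set.mem_insert a _, ?_⟩
    rintro v (rfl | rfl) hva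
    · exact absurd rfl hva
    · exact hab

end Finite

end IsTournament

end Tournament

section StronglyConnected

variable {V : Type*} {T : V → V → Prop}

/-- The digraph `T` is strongly connected: any vertex can be reached from any other one. -/
def IsStronglyConnected (T : V → V → Prop) : Prop :=
  ∀ a b, Relation.ReflTransGen T a b

namespace IsStronglyConnected

lemma exists_arc_out (hS : IsStronglyConnected T) {A : Set V} (hne : A.Nonempty)
    (huniv : A ≠ Set.univ) : ∃ a ∈ A, ∃ b ∉ A, T a b := by
  by_contra! hclosed
  obtain ⟨a, ha⟩ := hne
  refine huniv (Set.eq_univ_of_forall fun b ↦ ?_)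
  induction hS a b with
  | refl => exact ha
  | tail _ huv hu => exact by_contra fun hv ↦ hclosed _ hu _ hv huv

lemma exists_arc_in (hS : IsStronglyConnected T) {A : Set V} (hne : A.Nonempty)
    (huniv : A ≠ Set.univ) : ∃ a ∉ A, ∃ b ∈ A, T a b := by
  obtain ⟨a, ha, b, hb, hab⟩ :=
    hS.exists_arc_out (Set.nonempty_compl.2 huniv) (Set.compl_ne_univ.2 hne)
  exact ⟨a, ha, b, not_not.1 hb, hab⟩

lemma inNbrs_nonempty [Nontrivial V] (hS : IsStronglyConnected T) (v : V) :
    (inNbrs T v).Nonempty := by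
  obtain ⟨a, -, b, rfl, hab⟩ :=
    hS.exists_arc_in (Set.singleton_nonempty v) (Set.singleton_ne_univ v)
  exact ⟨a, hab⟩

end IsStronglyConnected

lemma IsCycle.isStronglyConnected_onFun {m : ℕ} [NeZero m] {c : ZMod m → V}
    (hc : IsCycle T m c) : IsStronglyConnected (T on c) := by
  intro i j
  have hreach (n : ℕ) : Relation.ReflTransGen (T on c) i (i + n) := by
    induction n with
    | zero => simpa using Relation.ReflTransGen.refl
    | succ n ih =>
      rw [Nat.cast_succ, ← add_assoc]
      exact ih.tail (hc.2 (i + n))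
  simpa using hreach (j - i).val

end StronglyConnected

section HasCycleOn

variable {V : Type*} {T : V → V → Prop} {S B : Set V} {a b c v : V}

/-- `S` is the vertex set of a directed cycle of `T`. Cycles are encoded as lists up to rotation;
the conversion to `IsCycle` is `HasCycleOn.exists_isCycle`. The empty list counts as a cycle. -/
def HasCycleOn (T : V → V → Prop) (S : Set V) : Prop :=
  ∃ s : Cycle V, s.Nodup ∧ s.Chain T ∧ {v | v ∈ s} = S

lemma hasCycleOn_of_list {l : List V} (hnodup : (a :: l).Nodup)
    (hchain : (a :: (l ++ [a])).IsChain T) : HasCycleOn T {v | v ∈ a :: l} :=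
  ⟨(a :: l : List V), hnodup, hchain, rfl⟩

namespace HasCycleOn

lemma exists_list (h : HasCycleOn T S) (ha : a ∈ S) :
    ∃ l : List V, (a :: l).Nodup ∧ (a :: (l ++ [a])).IsChain T ∧ {v | v ∈ a :: l} = S := by
  obtain ⟨⟨l⟩, hnodup, hchain, rfl⟩ := h
  obtain ⟨l₁, l₂, rfl⟩ := List.append_of_mem (show a ∈ l from ha)
  have hrot : ((l₁ ++ a :: l₂ : List V) : Cycle V) = (a :: (l₂ ++ l₁) : List V) :=
    Cycle.coe_eq_coe.2 List.isRotated_append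
  change Cycle.Nodup ((l₁ ++ a :: l₂ : List V) : Cycle V) at hnodup
  change Cycle.Chain T ((l₁ ++ a :: l₂ : List V) : Cycle V) at hchain
  rw [hrot] at hnodup hchain
  refine ⟨l₂ ++ l₁, hnodup, hchain, ?_⟩
  change {v | v ∈ ((a :: (l₂ ++ l₁) : List V) : Cycle V)} =
    {v | v ∈ ((l₁ ++ a :: l₂ : List V) : Cycle V)}
  rw [hrot]

lemma exists_isCycle {n : ℕ} [NeZero n] (h : HasCycleOn T S) (hn : S.ncard = n) :
    ∃ f : ZMod n → V, IsCycle T n f ∧ Set.range f = S := by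
  obtain ⟨a, ha⟩ := Set.nonempty_of_ncard_ne_zero (hn.trans_ne (NeZero.ne n))
  obtain ⟨l, hnodup, hchain, rfl⟩ := h.exists_list ha
  obtain rfl : (a :: l).length = n := by
    classical
    rw [← hn, ← List.coe_toFinset, Set.ncard_coe_finset, List.toFinset_card_of_nodup hnodup]
  have hlt (i : ZMod (a :: l).length) : i.val < (a :: l).length := ZMod.val_lt i
  refine ⟨fun i ↦ (a :: l)[i.val]'(hlt i), ⟨fun i j hij ↦ ?_, fun i ↦ ?_⟩, ?_⟩
  · exact ZMod.val_injective _ ((hnodup.getElem_inj_iff).1 hij)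
  · have harc := List.isChain_iff_getElem.1 hchain i.val (by simpa using hlt i)
    have hval : (i + 1).val = (i.val + 1) % (a :: l).length := by
      rw [ZMod.val_add, ZMod.val_one_eq_one_mod, Nat.add_mod_mod]
    simp only [← List.cons_append, hval] at harc ⊢
    rcases (Nat.succ_le_of_lt (hlt i)).lt_or_eq with hi | hi
    · rw [List.getElem_append_left (hlt i), List.getElem_append_left hi] at harc
      simpa only [Nat.mod_eq_of_lt hi] using harc
    · have hmod : (i.val + 1) % (a :: l).length = 0 := by
        rw [← Nat.succ_eq_add_one, hi, Nat.mod_self]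
      rw [List.getElem_append_left (hlt i), List.getElem_append_right hi.ge,
        List.getElem_singleton] at harc
      simpa only [hmod, List.getElem_cons_zero] using harc
  · ext w
    refine ⟨fun ⟨i, hi⟩ ↦ hi ▸ List.getElem_mem _, fun hw ↦ ?_⟩
    obtain ⟨k, hk, rfl⟩ := List.getElem_of_mem hw
    exact ⟨k, by simp only [ZMod.val_natCast, Nat.mod_eq_of_lt hk]⟩

protected lemma insert (hT : IsTournament T) (h : HasCycleOn T S) (ha : a ∈ S) (hav : T a v)
    (hb : b ∈ S) (hvb : T v b) : HasCycleOn T (insert v S) := by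
  by_cases hv : v ∈ S
  · rwa [Set.insert_eq_of_mem hv]
  obtain ⟨l, hnodup, hchain, rfl⟩ := h.exists_list ha
  have hbl : b ∈ l := List.mem_of_ne_of_mem (by rintro rfl; exact hT.asymm hav hvb) hb
  classical
  obtain ⟨w, l₁, l₂, hl₁, hvw, rfl, -⟩ :=
    List.exists_of_eraseP (p := fun u ↦ decide (T v u)) hbl (decide_eq_true hvb)
  simp only [decide_eq_true_eq] at hl₁ hvw
  have hto : ∀ u ∈ a :: l₁, T u v := by
    intro u hu
    rcases List.mem_cons.1 hu with rfl | hu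
    · exact hav
    · exact hT.arc_of_not_arc (fun h ↦ hv (by simp [← h, hu])) (hl₁ u hu)
  have hperm : (a :: (l₁ ++ v :: w :: l₂)).Perm (v :: a :: (l₁ ++ w :: l₂)) :=
    List.perm_middle (l₁ := a :: l₁)
  have hchain' : (a :: (l₁ ++ v :: w :: l₂ ++ [a])).IsChain T := by
    have happ : ((a :: l₁) ++ w :: (l₂ ++ [a])).IsChain T := by simpa using hchain
    have hnew : ((a :: l₁) ++ v :: w :: (l₂ ++ [a])).IsChain T :=
      happ.left_of_append.append (happ.right_of_append.cons_cons hvw) fun u hu _ hx ↦ by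
        obtain rfl : v = _ := by simpa using hx
        exact hto u (List.mem_of_getLast? hu)
    simpa using hnew
  convert hasCycleOn_of_list (hperm.nodup_iff.2 (List.nodup_cons.2 ⟨hv, hnodup⟩)) hchain' using 1
  ext u
  exact List.mem_cons.symm.trans hperm.mem_iff.symm

lemma union (hT : IsTournament T) (h : HasCycleOn T S) (hfin : B.Finite)
    (hB : ∀ v ∈ B, (∃ a ∈ S, T a v) ∧ ∃ b ∈ S, T v b) : HasCycleOn T (S ∪ B) := by
  induction B, hfin using Set.Finite.induction_on with
  | empty => rwa [Set.union_empty]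
  | insert _ _ ih =>
    obtain ⟨⟨a, ha, hav⟩, b, hb, hvb⟩ := hB _ (Set.mem_insert _ _)
    rw [Set.union_insert]
    exact (ih fun w hw ↦ hB w (Set.mem_insert_of_mem _ hw)).insert hT (.inl ha) hav (.inl hb) hvb

lemma triangle (hT : IsTournament T) (hab : T a b) (hbc : T b c) (hca : T c a) :
    HasCycleOn T {a, b, c} := by
  have hnodup : [a, b, c].Nodup := by simp [hT.ne hab, hT.ne hbc, (hT.ne hca).symm]
  have hchain : [a, b, c, a].IsChain T := by simp [hab, hbc, hca]
  convert hasCycleOn_of_list hnodup hchain using 1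
  ext v
  simp

lemma exists_superset [Finite V] (hT : IsTournament T) (hS : IsStronglyConnected T)
    (h : HasCycleOn T S) (ha : a ∈ S) (hdom : ∀ v ∉ S, T a v) {n : ℕ} (hSn : S.ncard ≤ n)
    (hn : n ≤ Nat.card V) : ∃ A, S ⊆ A ∧ HasCycleOn T A ∧ A.ncard = n := by
  induction n, hSn using Nat.le_induction with
  | base => exact ⟨S, subset_rfl, h, rfl⟩
  | succ n _ ih =>
    obtain ⟨A, hSA, hA, rfl⟩ := ih (by omega)
    have huniv : A ≠ Set.univ := by
      rintro rfl
      rw [Set.ncard_univ] at hn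
      omega
    obtain ⟨v, hv, b, hb, hvb⟩ := hS.exists_arc_in ⟨a, hSA ha⟩ huniv
    exact ⟨insert v A, hSA.trans (Set.subset_insert v A),
      hA.insert hT (hSA ha) (hdom v fun h ↦ hv (hSA h)) hb hvb, Set.ncard_insert_of_notMem hv⟩

end HasCycleOn

section Pancyclic

lemma IsStronglyConnected.exists_triangle [Nontrivial V] (hT : IsTournament T)
    (hS : IsStronglyConnected T) : ∃ a b c, T a b ∧ T b c ∧ T c a := by
  obtain ⟨a, ha⟩ := hS.inNbrs_nonempty (Classical.arbitrary V)
  obtain ⟨b, hab, c, hac, hbc⟩ := hS.exists_arc_out (A := {w | T a w}) ⟨_, ha⟩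
    fun h ↦ hT.1 a (h.ge (Set.mem_univ a))
  exact ⟨a, b, c, hab, hbc, hT.arc_of_not_arc (fun h ↦ hT.asymm hab (h ▸ hbc)) hac⟩

/-- If no vertex outside `S` can be inserted into a cycle on `S`, then every vertex outside `S`
dominates `S` or is dominated by `S`; strong connectivity yields an arc from the latter to the
former. -/
lemma IsStronglyConnected.exists_arc_of_forall_not_between (hT : IsTournament T)
    (hS : IsStronglyConnected T) {S : Set V} (hne : S.Nonempty) (huniv : S ≠ Set.univ)
    (hno : ∀ v ∉ S, ∀ a ∈ S, ∀ b ∈ S, T a v → ¬ T v b) :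
    ∃ o ∉ S, ∃ i ∉ S, T o i ∧ (∀ s ∈ S, T s o) ∧ ∀ s ∈ S, T i s := by
  obtain ⟨s₀, hs₀, o₀, ho₀, hs₀o₀⟩ := hS.exists_arc_out hne huniv
  obtain ⟨o, ⟨hoS, a, ha, hao⟩, i, hi, hoi⟩ :=
    hS.exists_arc_out (A := {v | v ∉ S ∧ ∃ a ∈ S, T a v}) ⟨o₀, ho₀, s₀, hs₀, hs₀o₀⟩
      fun h ↦ (h.ge (Set.mem_univ s₀)).1 hs₀
  have hiS : i ∉ S := fun h ↦ hno o hoS a ha i h hao hoi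
  refine ⟨o, hoS, i, hiS, hoi, fun s hs ↦ ?_, fun s hs ↦ ?_⟩
  · exact hT.arc_of_not_arc (fun h ↦ hoS (h ▸ hs)) (hno o hoS a ha s hs hao)
  · exact hT.arc_of_not_arc (fun h ↦ hiS (h ▸ hs)) fun h ↦ hi ⟨hiS, s, hs, h⟩

lemma HasCycleOn.exists_ncard_eq_succ [Finite V] (hT : IsTournament T)
    (hS : IsStronglyConnected T) {S : Set V} (h : HasCycleOn T S) (hcard : 2 ≤ S.ncard)
    (huniv : S ≠ Set.univ) : ∃ A, HasCycleOn T A ∧ A.ncard = S.ncard + 1 := by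
  by_cases hins : ∃ v ∉ S, ∃ a ∈ S, ∃ b ∈ S, T a v ∧ T v b
  · obtain ⟨v, hv, a, ha, b, hb, hav, hvb⟩ := hins
    exact ⟨insert v S, h.insert hT ha hav hb hvb, Set.ncard_insert_of_notMem hv⟩
  push Not at hins
  have hne : S.Nonempty := Set.nonempty_of_ncard_ne_zero (by omega)
  obtain ⟨o, ho, i, hi, hoi, hSo, hiS⟩ := hS.exists_arc_of_forall_not_between hT hne huniv hins
  obtain ⟨B, hBS, hBcard⟩ := Set.exists_subset_card_eq (show S.ncard - 1 ≤ S.ncard by omega)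
  obtain ⟨s, hs⟩ : B.Nonempty := Set.nonempty_of_ncard_ne_zero (by omega)
  have hcycle : HasCycleOn T ({s, o, i} ∪ B) :=
    (HasCycleOn.triangle hT (hSo s (hBS hs)) hoi (hiS s (hBS hs))).union hT B.toFinite fun v hv ↦
      ⟨⟨i, by simp, hiS v (hBS hv)⟩, o, by simp, hSo v (hBS hv)⟩
  have heq : {s, o, i} ∪ B = insert o (insert i B) := by
    rw [Set.insert_union, Set.insert_union, Set.singleton_union, Set.insert_eq_of_mem]
    exact .inr (.inr hs)
  refine ⟨_, hcycle, ?_⟩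
  have hiB : i ∉ B := fun h ↦ hi (hBS h)
  have hoB : o ∉ insert i B := by
    rintro (rfl | h)
    · exact hT.1 _ hoi
    · exact ho (hBS h)
  rw [heq, Set.ncard_insert_of_notMem hoB, Set.ncard_insert_of_notMem hiB]
  omega

/-- Moon's theorem. -/
theorem IsStronglyConnected.exists_hasCycleOn_ncard_eq [Finite V] (hT : IsTournament T)
    (hS : IsStronglyConnected T) {n : ℕ} (hn : 3 ≤ n) (hle : n ≤ Nat.card V) :
    ∃ S, HasCycleOn T S ∧ S.ncard = n := by
  induction n, hn using Nat.le_induction with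
  | base =>
    have : Nontrivial V := Finite.one_lt_card_iff_nontrivial.1 (by omega)
    obtain ⟨a, b, c, hab, hbc, hca⟩ := hS.exists_triangle hT
    exact ⟨{a, b, c}, .triangle hT hab hbc hca,
      Set.ncard_eq_three.2 ⟨a, b, c, hT.ne hab, (hT.ne hca).symm, hT.ne hbc, rfl⟩⟩
  | succ n hn ih =>
    obtain ⟨S, h, rfl⟩ := ih (by omega)
    refine h.exists_ncard_eq_succ hT hS (by omega) ?_
    rintro rfl
    rw [Set.ncard_univ] at hle
    omega

end Pancyclic

end HasCycleOn

section RemovableArc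

variable {V : Type*} {T : V → V → Prop} {p r x y : V}

/-- An arc `a → b` is removable if deleting its two endpoints leaves the vertex set of a directed
cycle and `b` has at least three in-neighbours. -/
def IsRemovableArc (T : V → V → Prop) (a b : V) : Prop :=
  T a b ∧ HasCycleOn T {a, b}ᶜ ∧ 3 ≤ (inNbrs T b).ncard

variable [Finite V]

lemma exists_isRemovableArc_of_ncard_eq_two (hT : IsTournament T) {D : Set V} (hD : D.ncard = 2)
    (hcycle : HasCycleOn T Dᶜ) (hin : ∀ a ∈ D, ∀ b ∈ D, T a b → 3 ≤ (inNbrs T b).ncard) :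
    ∃ a b, IsRemovableArc T a b := by
  obtain ⟨a, b, hab, rfl⟩ := hT.exists_arc_of_ncard_eq_two hD
  exact ⟨a, b, hab, hcycle, hin a (by simp) b (by simp) hab⟩

lemma hasCycleOn_inBall_sdiff (hT : IsTournament T) (hx : IsSource T (inNbrs T y) x) (hp : T p x)
    {D : Set V} (hD : D ⊆ secondInNbrs T y) (hpD : p ∉ D) : HasCycleOn T (inBall T y \ D) := by
  have hxy : T x y := hx.1
  have hp₂ : p ∈ secondInNbrs T y := hT.inNbrs_subset_secondInNbrs hx hp
  have hfirst : HasCycleOn T ({x, y, p} ∪ inNbrs T y \ {x}) :=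
    (HasCycleOn.triangle hT hxy (hT.arc_of_mem_secondInNbrs hp₂) hp).union hT (Set.toFinite _)
      fun v hv ↦ ⟨⟨x, by simp, hx.2 v hv.1 hv.2⟩, y, by simp, hv.1⟩
  have hsecond : HasCycleOn T ({x, y, p} ∪ inNbrs T y \ {x} ∪ secondInNbrs T y \ D) := by
    refine hfirst.union hT (Set.toFinite _) fun v hv ↦
      ⟨⟨y, by simp, hT.arc_of_mem_secondInNbrs hv.1⟩, ?_⟩
    obtain ⟨-, u, hvu, huy⟩ := hv.1
    exact ⟨u, by by_cases hux : u = x <;> simp [hux, huy], hvu⟩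
  have hyD : y ∉ D := fun h ↦ hT.notMem_secondInNbrs_self (hD h)
  have hdisj : ∀ v, T v y → v ∉ D := fun v hv h ↦ (hD h).1 hv
  convert hsecond using 1
  ext v
  simp only [inBall, Set.mem_sdiff, Set.mem_insert_iff, Set.mem_union, mem_inNbrs,
    Set.mem_singleton_iff]
  grind

lemma exists_isRemovableArc_of_ncard_inBall_add_two_le (hT : IsTournament T)
    (hS : IsStronglyConnected T) (hx : IsSource T (inNbrs T y) x) (hp : T p x)
    (hcard : (inBall T y).ncard + 2 ≤ Nat.card V) : ∃ a b, IsRemovableArc T a b := by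
  have hxy : T x y := hx.1
  have hball : HasCycleOn T (inBall T y) := by
    simpa using hasCycleOn_inBall_sdiff hT hx hp (Set.empty_subset _) (Set.notMem_empty p)
  obtain ⟨A, hsub, hA, hAcard⟩ := hball.exists_superset hT hS (Set.mem_insert y _)
    (fun v ↦ hT.arc_of_notMem_inBall) (Nat.le_sub_of_add_le hcard) (Nat.sub_le _ _)
  have hAc : Aᶜ.ncard = 2 := by
    have := Set.ncard_add_ncard_compl A
    omega
  refine exists_isRemovableArc_of_ncard_eq_two hT hAc (by rwa [compl_compl])
    fun a ha b hb hab ↦ ?_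
  have hxa : x ≠ a := fun h ↦ ha (hsub (h ▸ .inr (.inl hxy)))
  have hya : y ≠ a := fun h ↦ ha (hsub (h ▸ .inl rfl))
  have hb' : b ∉ inBall T y := fun h ↦ hb (hsub h)
  exact three_le_ncard_inNbrs (hT.arc_of_mem_inNbrs_of_notMem_inBall hxy hb')
    (hT.arc_of_notMem_inBall hb') hab (hT.ne hxy) hxa hya

lemma exists_isRemovableArc_of_compl_inBall_eq_singleton (hT : IsTournament T)
    (hx : IsSource T (inNbrs T y) x) (hr : (inBall T y)ᶜ = {r})
    (hx₂ : 2 ≤ (inNbrs T x).ncard) (hy₂ : 3 ≤ (secondInNbrs T y).ncard) :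
    ∃ a b, IsRemovableArc T a b := by
  have hxy : T x y := hx.1
  have hball : inBall T y = {r}ᶜ := (compl_eq_comm.1 hr).symm
  have hr' : r ∉ inBall T y := hr.ge rfl
  have hyr : T y r := hT.arc_of_notMem_inBall hr'
  by_cases hin : ∃ w ∈ secondInNbrs T y, T w r
  · obtain ⟨w, hw, hwr⟩ := hin
    obtain ⟨p, hp, hpw⟩ := Set.exists_ne_of_one_lt_ncard hx₂ w
    refine ⟨w, r, hwr, ?_, three_le_ncard_inNbrs hyr
      (hT.arc_of_mem_inNbrs_of_notMem_inBall hxy hr') hwr (hT.ne hxy).symm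
      (hT.ne (hT.arc_of_mem_secondInNbrs hw)) fun h ↦ hw.1 (h ▸ hxy)⟩
    convert hasCycleOn_inBall_sdiff hT hx hp (Set.singleton_subset_iff.2 hw) hpw using 1
    rw [hball, Set.insert_eq, Set.compl_union, Set.inter_comm, Set.sdiff_eq]
  push Not at hin
  have hrL : ∀ w ∈ secondInNbrs T y, T r w := fun w hw ↦
    hT.arc_of_not_arc (fun h ↦ hr' (h ▸ .inr (.inr hw))) (hin w hw)
  obtain ⟨p, hp⟩ : (inNbrs T x).Nonempty := Set.nonempty_of_ncard_ne_zero (by omega)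
  have hp₂ := hT.inNbrs_subset_secondInNbrs hx hp
  obtain ⟨D, hD, hDcard⟩ := Set.exists_subset_card_eq (s := secondInNbrs T y \ {p}) (n := 2)
    (by rw [Set.ncard_sdiff_singleton_of_mem hp₂]; omega)
  have hD₂ : D ⊆ secondInNbrs T y := hD.trans Set.sdiff_subset
  have hpD : p ∉ D := fun h ↦ (hD h).2 rfl
  have hrD : r ∉ D := fun h ↦ hr' (.inr (.inr (hD₂ h)))
  have hcycle : HasCycleOn T (insert r (inBall T y \ D)) :=
    (hasCycleOn_inBall_sdiff hT hx hp hD₂ hpD).insert hT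
      ⟨Set.mem_insert y _, fun h ↦ hT.notMem_secondInNbrs_self (hD₂ h)⟩ hyr
      ⟨.inr (.inr hp₂), hpD⟩ (hrL p hp₂)
  refine exists_isRemovableArc_of_ncard_eq_two hT hDcard ?_ fun a ha b hb hab ↦ ?_
  · convert hcycle using 1
    ext v
    by_cases hv : v = r <;> simp [hball, hv, hrD]
  · exact three_le_ncard_inNbrs (hT.arc_of_mem_secondInNbrs (hD₂ hb)) (hrL b (hD₂ hb)) hab
      (hT.ne hyr) (hT.ne (hT.arc_of_mem_secondInNbrs (hD₂ ha))) fun h ↦ hrD (h ▸ ha)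

/- If there is no removable arc, every head of an arc inside `N⁻⁻(y) \ {p}` dominates everything
but `y` and the tail. This forces a triangle `a → b → c → a` there that dominates `p` and `x`, so
that `a` can take over the role of `p` and `c → p` is removable after all. -/
lemma exists_isRemovableArc_of_inBall_eq_univ (hT : IsTournament T)
    (hx : IsSource T (inNbrs T y) x) (huniv : inBall T y = Set.univ) (hp : T p x)
    (hy₂ : 4 ≤ (secondInNbrs T y).ncard) : ∃ a b, IsRemovableArc T a b := by
  by_contra! hnone
  have hxy : T x y := hx.1
  have hyL : ∀ v ∈ secondInNbrs T y, T y v := fun v ↦ hT.arc_of_mem_secondInNbrs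
  have hxL : x ∉ secondInNbrs T y := fun h ↦ h.1 hxy
  have hp₂ := hT.inNbrs_subset_secondInNbrs hx hp
  have hsmall {q a b : V} (hq : T q x) (ha : a ∈ secondInNbrs T y \ {q})
      (hb : b ∈ secondInNbrs T y \ {q}) (hab : T a b) : (inNbrs T b).ncard < 3 := by
    have hcycle := hasCycleOn_inBall_sdiff hT hx hq (Set.pair_subset ha.1 hb.1)
      (by rintro (rfl | rfl); exacts [ha.2 rfl, hb.2 rfl])
    rw [huniv, ← Set.compl_eq_univ_sdiff] at hcycle
    exact not_le.1 fun h ↦ hnone a b ⟨hab, hcycle, h⟩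
  have hdom {a b d : V} (ha : a ∈ secondInNbrs T y \ {p}) (hb : b ∈ secondInNbrs T y \ {p})
      (hab : T a b) (hdy : d ≠ y) (hda : d ≠ a) (hdb : d ≠ b) : T b d :=
    hT.arc_of_ncard_inNbrs_lt_three (hsmall hp ha hb hab) (hyL b hb.1) hab
      (hT.ne (hyL a ha.1)) hdy hda hdb
  obtain ⟨a, ha, b, hb, hab⟩ := hT.exists_arc_of_one_lt_ncard (S := secondInNbrs T y \ {p})
    (by rw [Set.ncard_sdiff_singleton_of_mem hp₂]; omega)
  obtain ⟨c, hcL, hc⟩ := Set.exists_mem_notMem_of_ncard_lt_ncard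
    (s := {p, a, b}) (t := secondInNbrs T y)
    ((Set.ncard_insert_le _ _).trans_lt (by rw [Set.ncard_pair (hT.ne hab)]; omega))
  simp only [Set.mem_insert_iff, Set.mem_singleton_iff, not_or] at hc
  have hc' : c ∈ secondInNbrs T y \ {p} := ⟨hcL, hc.1⟩
  have hbc : T b c := hdom ha hb hab (hT.ne (hyL c hcL)).symm hc.2.1 hc.2.2
  have hca : T c a := hdom hb hc' hbc (hT.ne (hyL a ha.1)).symm (hT.ne hab) (Ne.symm hc.2.1)
  have hax : T a x := hdom hc' ha hca (hT.ne hxy) (fun h ↦ hxL (h ▸ hcL)) fun h ↦ hxL (h ▸ ha.1)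
  have hbp : T b p :=
    hdom ha hb hab (hT.ne (hyL p hp₂)).symm (Ne.symm ha.2) (Ne.symm hb.2)
  have hcp : T c p := hdom hb hc' hbc (hT.ne (hyL p hp₂)).symm (Ne.symm hb.2) (Ne.symm hc.1)
  have hthree : 3 ≤ (inNbrs T p).ncard := three_le_ncard_inNbrs (hyL p hp₂) hbp hcp
    (hT.ne (hyL b hb.1)) (hT.ne (hyL c hcL)) (hT.ne hbc)
  exact (hsmall hax ⟨hcL, hc.2.1⟩ ⟨hp₂, Ne.symm ha.2⟩ hcp).not_ge hthree

theorem exists_isRemovableArc (hT : IsTournament T) (hS : IsStronglyConnected T)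
    (hcard : 7 ≤ Nat.card V) : ∃ a b, IsRemovableArc T a b := by
  have : Nontrivial V := Finite.one_lt_card_iff_nontrivial.1 (by omega)
  obtain ⟨y, hmin⟩ := Finite.exists_min fun v ↦ (inNbrs T v).ncard
  rcases le_or_gt 3 (inNbrs T y).ncard with hlarge | hsmall
  · obtain ⟨A, hA, hAcard⟩ :=
      hS.exists_hasCycleOn_ncard_eq hT (n := Nat.card V - 2) (by omega) (by omega)
    have hAc : Aᶜ.ncard = 2 := by
      have := Set.ncard_add_ncard_compl A
      omega
    exact exists_isRemovableArc_of_ncard_eq_two hT hAc (by rwa [compl_compl])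
      fun a _ b _ _ ↦ hlarge.trans (hmin b)
  obtain ⟨x, hx⟩ := hT.exists_isSource_of_ncard_le_two (hS.inNbrs_nonempty y) (by omega)
  obtain ⟨p, hp⟩ := hS.inNbrs_nonempty x
  have hball : (inBall T y).ncard ≤ (inNbrs T y).ncard + (secondInNbrs T y).ncard + 1 :=
    (Set.ncard_insert_le _ _).trans (Nat.succ_le_succ (Set.ncard_union_le _ _))
  have hcompl := Set.ncard_add_ncard_compl (inBall T y)
  obtain hc | hc | hc : (inBall T y)ᶜ.ncard = 0 ∨ (inBall T y)ᶜ.ncard = 1 ∨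
      2 ≤ (inBall T y)ᶜ.ncard := by omega
  · have huniv : inBall T y = Set.univ := Set.compl_empty_iff.1 ((Set.ncard_eq_zero).1 hc)
    exact exists_isRemovableArc_of_inBall_eq_univ hT hx huniv hp (by omega)
  · obtain ⟨r, hr⟩ := Set.ncard_eq_one.1 hc
    exact exists_isRemovableArc_of_compl_inBall_eq_singleton hT hx hr
      (two_le_ncard_inNbrs_of_mem hx.1 (hmin x) (by omega)) (by omega)
  · exact exists_isRemovableArc_of_ncard_inBall_add_two_le hT hS hx hp (by omega)

end RemovableArc

lemma outDegTo_range {V W : Type*} {T : V → V → Prop} {c : W → V} (hc : Injective c) (i : W) :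
    outDegTo T (c i) (Set.range c) = outDeg (T on c) i := by
  rw [outDegTo, outDeg, ← Set.ncard_image_of_injective _ hc]
  congr 1
  ext v
  constructor
  · rintro ⟨⟨j, rfl⟩, hij⟩
    exact ⟨j, hij, rfl⟩
  · rintro ⟨j, hij, rfl⟩
    exact ⟨⟨j, rfl⟩, hij⟩

theorem stmt10 {V : Type*} (T : V → V → Prop) (hT : IsTournament T)
    (m : ℕ) (hm : 7 ≤ m) (c : ZMod m → V) (hc : IsCycle T m c) :
    ∃ c'' : ZMod (m - 2) → V, IsCycle T (m - 2) c'' ∧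
      Set.range c'' ⊆ Set.range c ∧
      ∃ x y : V, Set.range c \ Set.range c'' = {x, y} ∧ T x y ∧
        outDegTo T y (Set.range c) ≤ m - 4 := by
  have : NeZero m := ⟨by omega⟩
  have : NeZero (m - 2) := ⟨by omega⟩
  have hT' : IsTournament (T on c) := hT.onFun hc.1
  have hcard : Nat.card (ZMod m) = m := Nat.card_zmod m
  obtain ⟨x, y, hxy, hcycle, hin⟩ :=
    exists_isRemovableArc hT' hc.isStronglyConnected_onFun (hm.trans_eq hcard.symm)
  have hncard : ({x, y}ᶜ : Set (ZMod m)).ncard = m - 2 := by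
    rw [Set.ncard_compl, hcard, Set.ncard_pair (hT'.ne hxy)]
  obtain ⟨f, hf, hrange⟩ := hcycle.exists_isCycle hncard
  refine ⟨c ∘ f, ⟨hc.1.comp hf.1, hf.2⟩, Set.range_comp_subset_range f c, c x, c y, ?_, hxy, ?_⟩
  · rw [Set.range_comp, hrange, ← Set.image_univ, ← Set.image_sdiff hc.1,
      ← Set.compl_eq_univ_sdiff, compl_compl, Set.image_pair]
  · have hdeg := hT'.outDeg_add_ncard_inNbrs y
    rw [outDegTo_range hc.1]
    omega
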